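/- Let (ℝ⁴, g(t)) for t ∈ [0,T) be a warped Berger Ricci flow with bounded curvature starting at a complete bounded-curvature warped Berger metric g₀, and set ε := inf_{x>0} (c/b)(x,0). Then for every x > 0 and every t ∈ [0,T) one has ε ≤ (c/b)(x,t) ≤ 1. -/

import Mathlib

open Set Filter Topology MeasureTheory

noncomputable section

/-- Spatial derivative with respect to arclength: `f_s = ξ⁻¹ ∂ₓ f`. -/
def dS (ξ f : ℝ → ℝ → ℝ) (x t : ℝ) : ℝ := (ξ x t)⁻¹ * deriv (fun y => f y t) x

/-- A warped Berger Ricci flow on `ℝ⁴` over `[0,T)`, described by smooth positive radial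
functions `ξ, b, c` of the radial coordinate `x ∈ (0,∞)` and time `t ∈ [0,T)`,
satisfying the Ricci flow equations, completeness, the smoothness boundary conditions
at the origin of `ℝ⁴`, and the Berger ordering `c ≤ b` at `t = 0`. -/
structure WarpedBergerFlow where
  T : ℝ
  T_pos : 0 < T
  ξ : ℝ → ℝ → ℝ
  b : ℝ → ℝ → ℝ
  c : ℝ → ℝ → ℝ
  smooth_ξ : ContDiffOn ℝ (⊤ : ℕ∞) (fun p : ℝ × ℝ => ξ p.1 p.2) (Ioi 0 ×ˢ Ico 0 T)
  smooth_b : ContDiffOn ℝ (⊤ : ℕ∞) (fun p : ℝ × ℝ => b p.1 p.2) (Ioi 0 ×ˢ Ico 0 T)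
  smooth_c : ContDiffOn ℝ (⊤ : ℕ∞) (fun p : ℝ × ℝ => c p.1 p.2) (Ioi 0 ×ˢ Ico 0 T)
  ξ_pos : ∀ x > 0, ∀ t ∈ Ico (0:ℝ) T, 0 < ξ x t
  b_pos : ∀ x > 0, ∀ t ∈ Ico (0:ℝ) T, 0 < b x t
  c_pos : ∀ x > 0, ∀ t ∈ Ico (0:ℝ) T, 0 < c x t
  /-- Ricci flow equation for `b`:
  `b_t = b_ss + (c_s/c + b_s/b) b_s + 2(c² − 2b²)/b³`. -/
  eq_b : ∀ x > 0, ∀ t ∈ Ico (0:ℝ) T,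
    deriv (fun u => b x u) t =
      dS ξ (dS ξ b) x t + (dS ξ c x t / c x t + dS ξ b x t / b x t) * dS ξ b x t
        + 2 * ((c x t) ^ 2 - 2 * (b x t) ^ 2) / (b x t) ^ 3
  /-- Ricci flow equation for `c`: `c_t = c_ss + 2 (b_s/b) c_s − 2c³/b⁴`. -/
  eq_c : ∀ x > 0, ∀ t ∈ Ico (0:ℝ) T,
    deriv (fun u => c x u) t =
      dS ξ (dS ξ c) x t + 2 * (dS ξ b x t / b x t) * dS ξ c x t
        - 2 * (c x t) ^ 3 / (b x t) ^ 4
  /-- Ricci flow equation for `ξ`: `ξ_t = −ξ (2 b_ss/b + c_ss/c)`. -/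
  eq_ξ : ∀ x > 0, ∀ t ∈ Ico (0:ℝ) T,
    deriv (fun u => ξ x u) t =
      -(ξ x t) * (2 * dS ξ (dS ξ b) x t / b x t + dS ξ (dS ξ c) x t / c x t)
  /-- Completeness: the arclength `s(x,t) = ∫₀ˣ ξ(y,t) dy` tends to `∞` as `x → ∞`. -/
  complete : ∀ t ∈ Ico (0:ℝ) T,
    Tendsto (fun x => ∫ y in (0:ℝ)..x, ξ y t) atTop atTop
  /-- Smoothness at the origin: `b → 0` as `x → 0⁺`. -/
  b_origin : ∀ t ∈ Ico (0:ℝ) T, Tendsto (fun x => b x t) (𝓝[>] 0) (𝓝 0)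
  c_origin : ∀ t ∈ Ico (0:ℝ) T, Tendsto (fun x => c x t) (𝓝[>] 0) (𝓝 0)
  /-- Smoothness at the origin: `b_s → 1` as `x → 0⁺`. -/
  bs_origin : ∀ t ∈ Ico (0:ℝ) T, Tendsto (fun x => dS ξ b x t) (𝓝[>] 0) (𝓝 1)
  cs_origin : ∀ t ∈ Ico (0:ℝ) T, Tendsto (fun x => dS ξ c x t) (𝓝[>] 0) (𝓝 1)
  /-- The Berger ordering `c ≤ b` holds at `t = 0`. -/
  ordered_init : ∀ x > 0, c x 0 ≤ b x 0

namespace WarpedBergerFlow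

variable (F : WarpedBergerFlow)

/-- `b_s`. -/
def bS : ℝ → ℝ → ℝ := dS F.ξ F.b
/-- `c_s`. -/
def cS : ℝ → ℝ → ℝ := dS F.ξ F.c
/-- `b_ss`. -/
def bSS : ℝ → ℝ → ℝ := dS F.ξ (dS F.ξ F.b)
/-- `c_ss`. -/
def cSS : ℝ → ℝ → ℝ := dS F.ξ (dS F.ξ F.c)

/-- Sectional curvature `k12 = (4b² − 3c²)/b⁴ − b_s²/b²`. -/
def k12 (x t : ℝ) : ℝ :=
  (4 * (F.b x t) ^ 2 - 3 * (F.c x t) ^ 2) / (F.b x t) ^ 4 - (F.bS x t) ^ 2 / (F.b x t) ^ 2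
/-- Sectional curvature `k13 = c²/b⁴ − b_s c_s/(b c)`. -/
def k13 (x t : ℝ) : ℝ :=
  (F.c x t) ^ 2 / (F.b x t) ^ 4 - F.bS x t * F.cS x t / (F.b x t * F.c x t)
/-- Sectional curvature `k01 = −b_ss/b`. -/
def k01 (x t : ℝ) : ℝ := -(F.bSS x t) / F.b x t
/-- Sectional curvature `k03 = −c_ss/c`. -/
def k03 (x t : ℝ) : ℝ := -(F.cSS x t) / F.c x t
/-- `|Rm| = |k12| + |k13| + |k01| + |k03|`. -/
def RmNorm (x t : ℝ) : ℝ := |F.k12 x t| + |F.k13 x t| + |F.k01 x t| + |F.k03 x t|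
/-- Mean curvature of the Euclidean hypersphere of radius `x`: `H = 2 b_s/b + c_s/c`. -/
def meanH (x t : ℝ) : ℝ := 2 * F.bS x t / F.b x t + F.cS x t / F.c x t

/-- Bounded curvature: `|Rm|` is bounded on `(0,∞) × [0,t₀]` for every `t₀ < T`. -/
def BoundedCurvature : Prop :=
  ∀ t₀ ∈ Ico (0:ℝ) F.T, ∃ C : ℝ, ∀ x > 0, ∀ t ∈ Icc (0:ℝ) t₀, F.RmNorm x t ≤ C

/-- The initial metric belongs to the class `𝒢`: at `t = 0`, `b_s ≥ 0` and `H ≥ 0`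
everywhere, `b(·,0)` is bounded, and `|Rm|(·,0)` is bounded. -/
def InG : Prop :=
  (∀ x > 0, 0 ≤ F.bS x 0) ∧ (∀ x > 0, 0 ≤ F.meanH x 0) ∧
  (∃ M : ℝ, ∀ x > 0, F.b x 0 ≤ M) ∧ (∃ C : ℝ, ∀ x > 0, F.RmNorm x 0 ≤ C)

end WarpedBergerFlow

/-!
The function `φ = log (c/b)` satisfies `∂ₜφ = Δφ + 4 (b² - c²) / b⁴`. The reaction term is
nonpositive where `φ ≥ 0` and nonnegative where `φ ≤ 0`, so for constants `a₋ ≤ 0 ≤ a₊` both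
`φ - a₊` and `a₋ - φ` are subsolutions of the heat equation wherever they are positive. The
parabolic maximum principle then preserves `a₋ ≤ φ ≤ a₊`; take `a₊ = log 1` and, if `ε > 0`,
`a₋ = log ε`.

To apply it on a noncompact manifold one needs a barrier, which is `δ e^{At} (1 + s⁴)`. Under
`|Rm| ≤ κ²`, Sturm comparison of `b` and `c` with `s exp (κ² s² / 2)` gives
`H ≤ 3 (1/s + κ² s)`, which controls the Laplacian of `s⁴`, and `|∂ₜξ| ≤ 2 κ² ξ` controls its time
variation. The same comparison near the origin, together with `b_s / b, c_s / c ≥ -κ` far out (a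
positive function on a complete end with `f_ss ≤ κ² f` cannot decay faster than `e^{-κ s}`), gives
`|φ| ≤ κ² s² + κ s`, so the barrier dominates `φ` both at infinity and, because `φ → 0`, at the
origin.
-/

section Calculus

lemma le_of_hasDerivAt_nonpos_of_tendsto {f f' : ℝ → ℝ} {p x a : ℝ} (hx : p < x)
    (hf : ∀ y ∈ Ioc p x, HasDerivAt f (f' y) y) (hf' : ∀ y ∈ Ioc p x, f' y ≤ 0)
    (ha : Tendsto f (𝓝[>] p) (𝓝 a)) : f x ≤ a := by
  have hanti : AntitoneOn f (Ioc p x) :=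
    antitoneOn_of_hasDerivWithinAt_nonpos (convex_Ioc p x) (HasDerivAt.continuousOn hf)
      (fun y hy => (hf y (interior_subset hy)).hasDerivWithinAt)
      fun y hy => hf' y (interior_subset hy)
  refine ge_of_tendsto ha ?_
  filter_upwards [Ioc_mem_nhdsGT hx] with y hy
  exact hanti hy ⟨hx, le_rfl⟩ hy.2

lemma deriv_deriv_nonpos_of_isLocalMax {f : ℝ → ℝ} {x : ℝ} (hf : IsLocalMax f x)
    (hcont : ContinuousAt f x) : deriv (deriv f) x ≤ 0 := by
  by_contra! hpos
  have hmin : IsLocalMin f x := isLocalMin_of_deriv_deriv_pos hpos hf.deriv_eq_zero hcont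
  have hconst : f =ᶠ[𝓝 x] fun _ => f x := by
    filter_upwards [hf, hmin] with y hle hge using le_antisymm hle hge
  simp [hconst.deriv.deriv_eq] at hpos

lemma nonneg_of_hasDerivAt_of_eventually_le {f : ℝ → ℝ} {f' t : ℝ} (hf : HasDerivAt f f' t)
    (hle : ∀ᶠ u in 𝓝[<] t, f u ≤ f t) : 0 ≤ f' := by
  refine ge_of_tendsto (hasDerivAt_iff_tendsto_slope_left_right.1 hf).1 ?_
  filter_upwards [hle, self_mem_nhdsWithin] with u hu hut
  rw [slope_def_field]
  exact div_nonneg_of_nonpos (sub_nonpos.2 hu) (sub_nonpos.2 (le_of_lt hut))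

lemma le_exp_mul_of_abs_deriv_le {f : ℝ → ℝ} {a b K t u : ℝ} (hcont : ContinuousOn f (Icc a b))
    (hdiff : DifferentiableOn ℝ f (Ioo a b)) (hpos : ∀ v ∈ Icc a b, 0 < f v)
    (hK : ∀ v ∈ Ioo a b, |deriv f v| ≤ K * f v) (ht : t ∈ Icc a b) (hu : u ∈ Icc a b) :
    f u ≤ Real.exp (K * |u - t|) * f t := by
  have hlog : ∀ p ∈ Icc a b, ∀ q ∈ Icc a b, p < q →
      |Real.log (f q) - Real.log (f p)| ≤ K * (q - p) := by
    intro p hp q hq hpq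
    have hIcc : Icc p q ⊆ Icc a b := Icc_subset_Icc hp.1 hq.2
    have hIoo : Ioo p q ⊆ Ioo a b := Ioo_subset_Ioo hp.1 hq.2
    have hne : ∀ v ∈ Icc p q, f v ≠ 0 := fun v hv => (hpos v (hIcc hv)).ne'
    obtain ⟨v, hv, hslope⟩ := exists_deriv_eq_slope (fun w => Real.log (f w)) hpq
      ((hcont.mono hIcc).log hne)
      ((hdiff.mono hIoo).log fun w hw => hne w (Ioo_subset_Icc_self hw))
    have hfv : 0 < f v := hpos v (hIcc (Ioo_subset_Icc_self hv))
    rw [deriv.log (hdiff.differentiableAt (Ioo_mem_nhds (hIoo hv).1 (hIoo hv).2)) hfv.ne',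
      eq_div_iff (sub_pos.2 hpq).ne'] at hslope
    rw [← hslope, abs_mul, abs_div, abs_of_pos hfv, abs_of_pos (sub_pos.2 hpq)]
    exact mul_le_mul_of_nonneg_right ((div_le_iff₀ hfv).2 (hK v (hIoo hv))) (sub_pos.2 hpq).le
  have hlog_le : Real.log (f u) ≤ K * |u - t| + Real.log (f t) := by
    rcases lt_trichotomy u t with hut | rfl | htu
    · rw [abs_of_neg (sub_neg.2 hut)]
      linarith [(abs_le.1 (hlog u hu t ht hut)).1]
    · simp
    · rw [abs_of_pos (sub_pos.2 htu)]
      linarith [(abs_le.1 (hlog t ht u hu htu)).2]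
  calc f u = Real.exp (Real.log (f u)) := (Real.exp_log (hpos u hu)).symm
    _ ≤ Real.exp (K * |u - t| + Real.log (f t)) := Real.exp_le_exp.2 hlog_le
    _ = Real.exp (K * |u - t|) * f t := by rw [Real.exp_add, Real.exp_log (hpos t ht)]

lemma exists_bounds_of_quartic_lt_quadratic {δ K : ℝ} (hδ : 0 < δ) (hK : 0 ≤ K) :
    ∃ a > 0, ∃ B, ∀ s > 0, δ * (1 + s ^ 4) < K * (s ^ 2 + s) → a ≤ s ∧ s ≤ B := by
  refine ⟨min 1 (δ / (2 * K + 1)), by positivity, 1 + 2 * K / δ, fun s hs hlt => ⟨?_, ?_⟩⟩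
  · by_contra! hsmall
    have hs1 : s < 1 := hsmall.trans_le (min_le_left _ _)
    have hsδ : s * (2 * K + 1) < δ :=
      (lt_div_iff₀ (by positivity)).1 (hsmall.trans_le (min_le_right _ _))
    have hsq : K * s ^ 2 ≤ K * s := by gcongr; nlinarith
    linarith [show 0 < δ * s ^ 4 by positivity]
  · by_contra! hlarge
    have hs1 : 1 < s := by linarith [show 0 ≤ 2 * K / δ by positivity]
    have hsδ : 2 * K < s * δ := (div_lt_iff₀ hδ).1 (by linarith)
    have hsq : K * s ≤ K * s ^ 2 := by gcongr; nlinarith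
    have hquad : 2 * K * s ^ 2 ≤ s * δ * s ^ 2 := by gcongr
    have hquart : s * δ * s ^ 2 ≤ δ * s ^ 4 := by
      nlinarith [show 0 < δ * s ^ 3 by positivity]
    linarith

lemma exists_isMaxOn_of_superlevel_subset {X α : Type*} [TopologicalSpace X] [LinearOrder α]
    [TopologicalSpace α] [ClosedIciTopology α] {g : X → α} {S K : Set X} {p : X} {a : α}
    (hK : IsCompact K) (hKS : K ⊆ S) (hcont : ContinuousOn g K)
    (hsuper : ∀ q ∈ S, a < g q → q ∈ K) (hp : p ∈ S) (hpa : a < g p) :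
    ∃ q ∈ S, a < g q ∧ IsMaxOn g S q := by
  obtain ⟨q, hqK, hq⟩ := hK.exists_isMaxOn ⟨p, hsuper p hp hpa⟩ hcont
  have hqa : a < g q := hpa.trans_le (hq (hsuper p hp hpa))
  refine ⟨q, hKS hqK, hqa, fun y hy => ?_⟩
  rcases le_or_gt (g y) a with hya | hya
  · exact hya.trans hqa.le
  · exact hq (hsuper y hy hya)

end Calculus

/-! ### Sturm comparison of warping functions -/

section WarpingFunction

/-- `s` is the arclength from the origin of the complete radial metric `ξ² dx²` on `(0,∞)`. -/
structure IsArclength (ξ s : ℝ → ℝ) : Prop where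
  density_pos : ∀ x > 0, 0 < ξ x
  hasDerivAt : ∀ x > 0, HasDerivAt s (ξ x) x
  tendsto_zero : Tendsto s (𝓝[>] 0) (𝓝 0)
  tendsto_atTop : Tendsto s atTop atTop

/-- `f` is positive on `(0,∞)` with arclength derivatives `f₁ = f_s` and `f₂ = f_ss` relative to
the density `ξ`, and satisfies the smoothness conditions `f = 0`, `f_s = 1` at the origin. These
are the warping functions of a rotationally symmetric metric at a fixed time; the derivatives are
named so that comparison functions need no `deriv`. -/
structure IsWarpingFunction (ξ f f₁ f₂ : ℝ → ℝ) : Prop where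
  pos : ∀ x > 0, 0 < f x
  hasDerivAt : ∀ x > 0, HasDerivAt f (ξ x * f₁ x) x
  hasDerivAt_fst : ∀ x > 0, HasDerivAt f₁ (ξ x * f₂ x) x
  tendsto_zero : Tendsto f (𝓝[>] 0) (𝓝 0)
  tendsto_one : Tendsto f₁ (𝓝[>] 0) (𝓝 1)

variable {ξ s f f₁ f₂ g g₁ g₂ : ℝ → ℝ} {κ x : ℝ}

namespace IsArclength

lemma strictMonoOn (hs : IsArclength ξ s) : StrictMonoOn s (Ioi 0) :=
  strictMonoOn_of_hasDerivWithinAt_pos (convex_Ioi 0) (HasDerivAt.continuousOn hs.hasDerivAt)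
    (fun y hy => (hs.hasDerivAt y (interior_subset hy)).hasDerivWithinAt)
    fun y hy => hs.density_pos y (interior_subset hy)

lemma pos (hs : IsArclength ξ s) (hx : 0 < x) : 0 < s x := by
  have hhalf : 0 ≤ s (x / 2) := by
    refine le_of_tendsto hs.tendsto_zero ?_
    filter_upwards [Ioc_mem_nhdsGT (half_pos hx)] with y hy
    exact hs.strictMonoOn.monotoneOn hy.1 (half_pos hx) hy.2
  exact hhalf.trans_lt (hs.strictMonoOn (half_pos hx) hx (half_lt_self hx))

lemma integral (hcont : ContinuousOn ξ (Ioi 0)) (hpos : ∀ x > 0, 0 < ξ x)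
    (hcomplete : Tendsto (fun x => ∫ y in (0 : ℝ)..x, ξ y) atTop atTop) :
    IsArclength ξ fun x => ∫ y in (0 : ℝ)..x, ξ y := by
  -- A non-integrable `ξ` would have junk integral `0`, so completeness forces integrability at `0`.
  have hint : ∀ x > 0, IntervalIntegrable ξ volume 0 x := by
    intro x hx
    obtain ⟨X, hX, hxX⟩ := ((hcomplete.eventually_gt_atTop 0).and (eventually_ge_atTop x)).exists
    refine (intervalIntegral.intervalIntegrable_of_integral_ne_zero hX.ne').mono_set ?_
    rw [uIcc_of_le hx.le, uIcc_of_le (hx.le.trans hxX)]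
    exact Icc_subset_Icc_right hxX
  refine ⟨hpos, fun x hx => ?_, ?_, hcomplete⟩
  · exact intervalIntegral.integral_hasDerivAt_right (hint x hx)
      (hcont.stronglyMeasurableAtFilter isOpen_Ioi x hx) (hcont.continuousAt (Ioi_mem_nhds hx))
  · have hprim := intervalIntegral.continuousOn_primitive_interval' (hint 1 one_pos) left_mem_uIcc
      0 left_mem_uIcc
    rw [ContinuousWithinAt, intervalIntegral.integral_same, uIcc_of_le zero_le_one] at hprim
    refine hprim.mono_left ?_
    rw [← nhdsWithin_Ioc_eq_nhdsGT one_pos]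
    exact nhdsWithin_mono _ Ioc_subset_Icc_self

/-- The comparison function `s exp (κ s² / 2)`, whose logarithmic derivative is `1 / s + κ s`. -/
lemma isWarpingFunction_mul_exp (hs : IsArclength ξ s) (κ : ℝ) :
    IsWarpingFunction ξ (fun x => s x * Real.exp (κ * s x ^ 2 / 2))
      (fun x => (1 + κ * s x ^ 2) * Real.exp (κ * s x ^ 2 / 2))
      (fun x => (3 * κ + κ ^ 2 * s x ^ 2) * (s x * Real.exp (κ * s x ^ 2 / 2))) := by
  have hexp : ∀ x > 0, HasDerivAt (fun x => Real.exp (κ * s x ^ 2 / 2))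
      (Real.exp (κ * s x ^ 2 / 2) * (κ * s x * ξ x)) x := by
    intro x hx
    refine ((((hs.hasDerivAt x hx).fun_pow 2).const_mul κ).div_const 2).exp.congr_deriv ?_
    push_cast
    ring
  have hexp_zero : Tendsto (fun x => Real.exp (κ * s x ^ 2 / 2)) (𝓝[>] 0) (𝓝 1) := by
    simpa using (((hs.tendsto_zero.pow 2).const_mul κ).div_const 2).rexp
  refine ⟨fun x hx => mul_pos (hs.pos hx) (Real.exp_pos _), fun x hx => ?_, fun x hx => ?_, ?_, ?_⟩
  · refine ((hs.hasDerivAt x hx).fun_mul (hexp x hx)).congr_deriv ?_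
    ring
  · refine (((((hs.hasDerivAt x hx).fun_pow 2).const_mul κ).const_add 1).fun_mul
      (hexp x hx)).congr_deriv ?_
    push_cast
    ring
  · simpa using hs.tendsto_zero.mul hexp_zero
  · simpa using (((hs.tendsto_zero.pow 2).const_mul κ).const_add 1).mul hexp_zero

end IsArclength

namespace IsWarpingFunction

/-- Sturm comparison: the Wronskian `f_s g - f g_s` vanishes at the origin and decreases. -/
lemma div_le_div_of_mul_le_mul (hf : IsWarpingFunction ξ f f₁ f₂) (hg : IsWarpingFunction ξ g g₁ g₂)
    (hξ : ∀ y ∈ Ioc 0 x, 0 ≤ ξ y) (hx : 0 < x) (hfg : ∀ y ∈ Ioc 0 x, f₂ y * g y ≤ f y * g₂ y) :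
    f₁ x / f x ≤ g₁ x / g x := by
  have hderiv : ∀ y ∈ Ioc 0 x, HasDerivAt (fun y => f₁ y * g y - f y * g₁ y)
      (ξ y * (f₂ y * g y - f y * g₂ y)) y := by
    intro y hy
    refine (((hf.hasDerivAt_fst y hy.1).fun_mul (hg.hasDerivAt y hy.1)).fun_sub
      ((hf.hasDerivAt y hy.1).fun_mul (hg.hasDerivAt_fst y hy.1))).congr_deriv ?_
    ring
  have hzero : Tendsto (fun y => f₁ y * g y - f y * g₁ y) (𝓝[>] 0) (𝓝 0) := by
    simpa using (hf.tendsto_one.mul hg.tendsto_zero).sub (hf.tendsto_zero.mul hg.tendsto_one)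
  have hwronskian := le_of_hasDerivAt_nonpos_of_tendsto hx hderiv
    (fun y hy => mul_nonpos_of_nonneg_of_nonpos (hξ y hy) (sub_nonpos.2 (hfg y hy))) hzero
  rw [div_le_div_iff₀ (hf.pos x hx) (hg.pos x hx)]
  linarith

lemma div_le_inv_add_mul (hs : IsArclength ξ s) (hf : IsWarpingFunction ξ f f₁ f₂) (hκ : 0 ≤ κ)
    (hx : 0 < x) (hf₂ : ∀ y > 0, f₂ y ≤ κ * f y) : f₁ x / f x ≤ 1 / s x + κ * s x := by
  have hg := hs.isWarpingFunction_mul_exp κ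
  have hcomp := hf.div_le_div_of_mul_le_mul hg (fun y hy => (hs.density_pos y hy.1).le) hx
    fun y hy => by
      have hfy := hf.pos y hy.1
      have hgy := hg.pos y hy.1
      calc f₂ y * (s y * Real.exp (κ * s y ^ 2 / 2))
          ≤ (κ * f y) * (s y * Real.exp (κ * s y ^ 2 / 2)) := by gcongr; exact hf₂ y hy.1
        _ ≤ (κ * f y + f y * (2 * κ + κ ^ 2 * s y ^ 2)) * (s y * Real.exp (κ * s y ^ 2 / 2)) := by
          gcongr
          exact le_add_of_nonneg_right (by positivity)
        _ = _ := by ring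
  rw [mul_div_mul_right _ _ (Real.exp_ne_zero _)] at hcomp
  refine hcomp.trans_eq ?_
  field_simp [(hs.pos hx).ne']

lemma inv_sub_mul_le_div (hs : IsArclength ξ s) (hf : IsWarpingFunction ξ f f₁ f₂) (hκ : 0 ≤ κ)
    (hx : 0 < x) (hf₂ : ∀ y > 0, -(κ * f y) ≤ f₂ y) (hsx : κ * s x ^ 2 ≤ 2) :
    1 / s x - κ * s x ≤ f₁ x / f x := by
  have hg := hs.isWarpingFunction_mul_exp (-κ)
  have hcomp := hg.div_le_div_of_mul_le_mul hf (fun y hy => (hs.density_pos y hy.1).le) hx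
    fun y hy => by
      have hfy := hf.pos y hy.1
      have hgy := hg.pos y hy.1
      have hsy : κ * s y ^ 2 ≤ 2 := by
        have := hs.pos hy.1
        refine le_trans ?_ hsx
        gcongr
        exact hs.strictMonoOn.monotoneOn hy.1 hx hy.2
      calc (3 * -κ + (-κ) ^ 2 * s y ^ 2) * (s y * Real.exp (-κ * s y ^ 2 / 2)) * f y
          = (κ * (κ * s y ^ 2 - 2) * f y - κ * f y) * (s y * Real.exp (-κ * s y ^ 2 / 2)) := by ring
        _ ≤ (0 - κ * f y) * (s y * Real.exp (-κ * s y ^ 2 / 2)) := by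
          gcongr
          exact mul_nonpos_of_nonpos_of_nonneg
            (mul_nonpos_of_nonneg_of_nonpos hκ (by linarith)) hfy.le
        _ ≤ f₂ y * (s y * Real.exp (-κ * s y ^ 2 / 2)) := by
          gcongr
          linarith [hf₂ y hy.1]
        _ = _ := mul_comm _ _
  rw [mul_div_mul_right _ _ (Real.exp_ne_zero _)] at hcomp
  refine le_of_eq_of_le ?_ hcomp
  field_simp [(hs.pos hx).ne']
  ring

lemma antitoneOn_exp_neg_mul (hs : IsArclength ξ s) (hf : IsWarpingFunction ξ f f₁ f₂)
    (hf₂ : ∀ y > 0, f₂ y ≤ κ ^ 2 * f y) :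
    AntitoneOn (fun y => Real.exp (-κ * s y) * (f₁ y + κ * f y)) (Ioi 0) := by
  have hderiv : ∀ y > 0, HasDerivAt (fun y => Real.exp (-κ * s y) * (f₁ y + κ * f y))
      (ξ y * Real.exp (-κ * s y) * (f₂ y - κ ^ 2 * f y)) y := by
    intro y hy
    refine (((hs.hasDerivAt y hy).const_mul (-κ)).exp.fun_mul ((hf.hasDerivAt_fst y hy).fun_add
      ((hf.hasDerivAt y hy).const_mul κ))).congr_deriv ?_
    ring
  refine antitoneOn_of_hasDerivWithinAt_nonpos (convex_Ioi 0) (HasDerivAt.continuousOn hderiv)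
    (fun y hy => (hderiv y (interior_subset hy)).hasDerivWithinAt) fun y hy => ?_
  have hy : 0 < y := interior_subset hy
  exact mul_nonpos_of_nonneg_of_nonpos
    (mul_nonneg (hs.density_pos y hy).le (Real.exp_pos _).le) (sub_nonpos.2 (hf₂ y hy))

/-- Once `f_s + κ f` is negative, `exp (κ s) f` decreases at least linearly in `s`. -/
lemma antitoneOn_exp_mul_add (hs : IsArclength ξ s) (hf : IsWarpingFunction ξ f f₁ f₂)
    (hκ : 0 ≤ κ) (hx : 0 < x) (hf₂ : ∀ y > 0, f₂ y ≤ κ ^ 2 * f y) {η : ℝ} (hη : 0 ≤ η)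
    (hηx : Real.exp (-κ * s x) * (f₁ x + κ * f x) ≤ -η) :
    AntitoneOn (fun y => Real.exp (κ * s y) * f y + η * s y) (Ici x) := by
  have hpos : ∀ y ∈ Ici x, 0 < y := fun y hy => hx.trans_le hy
  have hderiv : ∀ y ∈ Ici x, HasDerivAt (fun y => Real.exp (κ * s y) * f y + η * s y)
      (ξ y * (Real.exp (κ * s y) * (f₁ y + κ * f y) + η)) y := by
    intro y hy
    refine (((hs.hasDerivAt y (hpos y hy)).const_mul κ).exp.fun_mul
      (hf.hasDerivAt y (hpos y hy))).fun_add
      ((hs.hasDerivAt y (hpos y hy)).const_mul η) |>.congr_deriv ?_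
    ring
  have hdecay : ∀ y ∈ Ici x, Real.exp (κ * s y) * (f₁ y + κ * f y) + η ≤ 0 := by
    intro y hy
    have hexp : 1 ≤ Real.exp (κ * s y) ^ 2 :=
      one_le_pow₀ (Real.one_le_exp (mul_nonneg hκ (hs.pos (hpos y hy)).le))
    have hanti : Real.exp (-κ * s y) * (f₁ y + κ * f y) ≤ -η :=
      (hf.antitoneOn_exp_neg_mul hs hf₂ hx (hpos y hy) hy).trans hηx
    calc Real.exp (κ * s y) * (f₁ y + κ * f y) + η
        = Real.exp (κ * s y) ^ 2 * (Real.exp (-κ * s y) * (f₁ y + κ * f y)) + η := by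
          rw [neg_mul, Real.exp_neg]
          field_simp
      _ ≤ Real.exp (κ * s y) ^ 2 * -η + η := by gcongr
      _ ≤ 0 := by nlinarith
  exact antitoneOn_of_hasDerivWithinAt_nonpos (convex_Ici x) (HasDerivAt.continuousOn hderiv)
    (fun y hy => (hderiv y (interior_subset hy)).hasDerivWithinAt)
    fun y hy => mul_nonpos_of_nonneg_of_nonpos
      (hs.density_pos y (hpos y (interior_subset hy))).le (hdecay y (interior_subset hy))

lemma neg_le_div (hs : IsArclength ξ s) (hf : IsWarpingFunction ξ f f₁ f₂) (hκ : 0 ≤ κ)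
    (hx : 0 < x) (hf₂ : ∀ y > 0, f₂ y ≤ κ ^ 2 * f y) : -κ ≤ f₁ x / f x := by
  rw [le_div_iff₀ (hf.pos x hx)]
  by_contra! hlt
  obtain ⟨η, hη, hηx⟩ : ∃ η > 0, Real.exp (-κ * s x) * (f₁ x + κ * f x) = -η :=
    ⟨-(Real.exp (-κ * s x) * (f₁ x + κ * f x)),
      neg_pos.2 (mul_neg_of_pos_of_neg (Real.exp_pos _) (by linarith)), (neg_neg _).symm⟩
  obtain ⟨y, hy, hxy⟩ := (((hs.tendsto_atTop.const_mul_atTop hη).eventually_gt_atTop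
    (Real.exp (κ * s x) * f x + η * s x)).and (eventually_ge_atTop x)).exists
  have hle : Real.exp (κ * s y) * f y + η * s y ≤ Real.exp (κ * s x) * f x + η * s x :=
    hf.antitoneOn_exp_mul_add hs hκ hx hf₂ hη.le hηx.le self_mem_Ici hxy hxy
  linarith [mul_pos (Real.exp_pos (κ * s y)) (hf.pos y (hx.trans_le hxy))]

lemma tendsto_div_one (hξ : ∀ y > 0, ξ y ≠ 0) (hf : IsWarpingFunction ξ f f₁ f₂)
    (hg : IsWarpingFunction ξ g g₁ g₂) : Tendsto (fun y => f y / g y) (𝓝[>] 0) (𝓝 1) := by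
  refine HasDerivAt.lhopital_zero_nhdsGT (f' := fun y => ξ y * f₁ y) (g' := fun y => ξ y * g₁ y)
    ?_ ?_ ?_ hf.tendsto_zero hg.tendsto_zero ?_
  · filter_upwards [self_mem_nhdsWithin] with y hy using hf.hasDerivAt y hy
  · filter_upwards [self_mem_nhdsWithin] with y hy using hg.hasDerivAt y hy
  · filter_upwards [self_mem_nhdsWithin, hg.tendsto_one.eventually_ne one_ne_zero] with y hy hg₁
    exact mul_ne_zero (hξ y hy) hg₁
  · have hlim := hf.tendsto_one.div hg.tendsto_one one_ne_zero
    rw [div_one] at hlim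
    refine hlim.congr' ?_
    filter_upwards [self_mem_nhdsWithin] with y hy
    exact (mul_div_mul_left _ _ (hξ y hy)).symm

lemma div_sub_div_le (hs : IsArclength ξ s) (hf : IsWarpingFunction ξ f f₁ f₂)
    (hg : IsWarpingFunction ξ g g₁ g₂) (hκ : 0 ≤ κ) (hx : 0 < x)
    (hf₂ : ∀ y > 0, f₂ y ≤ κ ^ 2 * f y) (hg₂ : ∀ y > 0, |g₂ y| ≤ κ ^ 2 * g y) :
    f₁ x / f x - g₁ x / g x ≤ 2 * κ ^ 2 * s x + κ := by
  have hf_le := hf.div_le_inv_add_mul hs (sq_nonneg κ) hx hf₂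
  have hsx := hs.pos hx
  rcases le_or_gt (κ ^ 2 * s x ^ 2) 2 with hnear | hfar
  · linarith [hg.inv_sub_mul_le_div hs (sq_nonneg κ) hx (fun y hy => (abs_le.1 (hg₂ y hy)).1) hnear]
  · have hinv : 1 / s x ≤ κ ^ 2 * s x := by
      rw [div_le_iff₀ hsx]
      linarith
    linarith [hg.neg_le_div hs hκ hx fun y hy => (le_abs_self _).trans (hg₂ y hy)]

lemma log_div_le (hs : IsArclength ξ s) (hf : IsWarpingFunction ξ f f₁ f₂)
    (hg : IsWarpingFunction ξ g g₁ g₂) (hκ : 0 ≤ κ) (hx : 0 < x)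
    (hf₂ : ∀ y > 0, f₂ y ≤ κ ^ 2 * f y) (hg₂ : ∀ y > 0, |g₂ y| ≤ κ ^ 2 * g y) :
    Real.log (f x / g x) ≤ κ ^ 2 * s x ^ 2 + κ * s x := by
  have hderiv : ∀ y ∈ Ioc 0 x,
      HasDerivAt (fun y => Real.log (f y / g y) - (κ ^ 2 * s y ^ 2 + κ * s y))
        (ξ y * (f₁ y / f y - g₁ y / g y - (2 * κ ^ 2 * s y + κ))) y := by
    intro y hy
    have hfy := (hf.pos y hy.1).ne'
    have hgy := (hg.pos y hy.1).ne'
    refine ((((hf.hasDerivAt y hy.1).fun_div (hg.hasDerivAt y hy.1) hgy).log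
      (div_ne_zero hfy hgy)).fun_sub ((((hs.hasDerivAt y hy.1).fun_pow 2).const_mul (κ ^ 2)).fun_add
      ((hs.hasDerivAt y hy.1).const_mul κ))).congr_deriv ?_
    push_cast
    field_simp
  have hzero : Tendsto (fun y => Real.log (f y / g y) - (κ ^ 2 * s y ^ 2 + κ * s y))
      (𝓝[>] 0) (𝓝 0) := by
    simpa using ((hf.tendsto_div_one (fun y hy => (hs.density_pos y hy).ne') hg).log
      one_ne_zero).sub (((hs.tendsto_zero.pow 2).const_mul (κ ^ 2)).add
      (hs.tendsto_zero.const_mul κ))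
  have hle := le_of_hasDerivAt_nonpos_of_tendsto hx hderiv
    (fun y hy => mul_nonpos_of_nonneg_of_nonpos (hs.density_pos y hy.1).le
      (sub_nonpos.2 (hf.div_sub_div_le hs hg hκ hy.1 hf₂ hg₂))) hzero
  linarith

end IsWarpingFunction

end WarpingFunction

/-! ### The radial Laplacian -/

section RadialDerivative

variable {ξ f : ℝ → ℝ → ℝ} {x t d : ℝ}

lemma hasDerivAt_mul_dS (hξ : ξ x t ≠ 0) (hf : DifferentiableAt ℝ (fun y => f y t) x) :
    HasDerivAt (fun y => f y t) (ξ x t * dS ξ f x t) x := by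
  rw [dS, mul_inv_cancel_left₀ hξ]
  exact hf.hasDerivAt

lemma dS_eq_of_hasDerivAt (hξ : ξ x t ≠ 0) (hf : HasDerivAt (fun y => f y t) (ξ x t * d) x) :
    dS ξ f x t = d := by
  rw [dS, hf.deriv, inv_mul_cancel_left₀ hξ]

lemma contDiffOn_dS (hξ : ContDiffOn ℝ (⊤ : ℕ∞) (fun y => ξ y t) (Ioi 0))
    (hξ_ne : ∀ y > 0, ξ y t ≠ 0) (hf : ContDiffOn ℝ (⊤ : ℕ∞) (fun y => f y t) (Ioi 0)) :
    ContDiffOn ℝ (⊤ : ℕ∞) (fun y => dS ξ f y t) (Ioi 0) :=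
  (hξ.inv hξ_ne).mul (hf.deriv_of_isOpen isOpen_Ioi (by simp))

lemma dS_dS_nonpos_of_isLocalMax (hξ : DifferentiableAt ℝ (fun y => ξ y t) x) (hξ_ne : ξ x t ≠ 0)
    (hf : ContDiffAt ℝ 2 (fun y => f y t) x) (hmax : IsLocalMax (fun y => f y t) x) :
    dS ξ (dS ξ f) x t ≤ 0 := by
  have hf' : DifferentiableAt ℝ (deriv fun y => f y t) x :=
    (hf.derivWithin (m := 1) (by norm_num)).differentiableAt one_ne_zero
  have hderiv : deriv (fun y => dS ξ f y t) x = (ξ x t)⁻¹ * deriv (deriv fun y => f y t) x := by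
    unfold dS
    rw [deriv_fun_mul (hξ.fun_inv hξ_ne) hf', hmax.deriv_eq_zero, mul_zero, zero_add]
  rw [dS, hderiv, ← mul_assoc]
  exact mul_nonpos_of_nonneg_of_nonpos (mul_self_nonneg _)
    (deriv_deriv_nonpos_of_isLocalMax hmax hf.continuousAt)

end RadialDerivative

namespace WarpedBergerFlow

variable {F : WarpedBergerFlow} {f u v : ℝ → ℝ → ℝ} {x t : ℝ}

lemma zero_mem_Ico (F : WarpedBergerFlow) : (0 : ℝ) ∈ Ico 0 F.T := ⟨le_rfl, F.T_pos⟩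

lemma contDiffOn_radial
    (hf : ContDiffOn ℝ (⊤ : ℕ∞) (fun p : ℝ × ℝ => f p.1 p.2) (Ioi 0 ×ˢ Ico 0 F.T))
    (ht : t ∈ Ico 0 F.T) : ContDiffOn ℝ (⊤ : ℕ∞) (fun y => f y t) (Ioi 0) :=
  hf.comp (g := fun p : ℝ × ℝ => f p.1 p.2) (f := fun y => (y, t)) (by fun_prop)
    fun _ hy => ⟨hy, ht⟩

lemma contDiffOn_time
    (hf : ContDiffOn ℝ (⊤ : ℕ∞) (fun p : ℝ × ℝ => f p.1 p.2) (Ioi 0 ×ˢ Ico 0 F.T))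
    (hx : 0 < x) : ContDiffOn ℝ (⊤ : ℕ∞) (fun u => f x u) (Ico 0 F.T) :=
  hf.comp (g := fun p : ℝ × ℝ => f p.1 p.2) (f := fun u => (x, u)) (by fun_prop)
    fun _ hu => ⟨hx, hu⟩

lemma differentiableAt_time
    (hf : ContDiffOn ℝ (⊤ : ℕ∞) (fun p : ℝ × ℝ => f p.1 p.2) (Ioi 0 ×ˢ Ico 0 F.T))
    (hx : 0 < x) (ht : t ∈ Ioo 0 F.T) : DifferentiableAt ℝ (fun u => f x u) t :=
  ((contDiffOn_time hf hx).contDiffAt (Ico_mem_nhds ht.1 ht.2)).differentiableAt (by simp)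

variable (F) in
/-- The Laplacian of `g(t)` acting on radial functions, `v_ss + H v_s`. -/
def laplacian (v : ℝ → ℝ → ℝ) (x t : ℝ) : ℝ :=
  dS F.ξ (dS F.ξ v) x t + F.meanH x t * dS F.ξ v x t

variable (F) in
/-- The arclength `s(x,t)` from the origin at time `t`. -/
def arclength (x t : ℝ) : ℝ := ∫ y in (0 : ℝ)..x, F.ξ y t

lemma isArclength (ht : t ∈ Ico 0 F.T) :
    IsArclength (fun y => F.ξ y t) (fun y => F.arclength y t) :=
  IsArclength.integral (contDiffOn_radial F.smooth_ξ ht).continuousOn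
    (fun x hx => F.ξ_pos x hx t ht) (F.complete t ht)

lemma arclength_pos (hx : 0 < x) (ht : t ∈ Ico 0 F.T) : 0 < F.arclength x t :=
  (isArclength ht).pos hx

lemma contDiffOn_arclength (ht : t ∈ Ico 0 F.T) :
    ContDiffOn ℝ (⊤ : ℕ∞) (fun y => F.arclength y t) (Ioi 0) := by
  have hderiv := (isArclength ht).hasDerivAt
  refine (contDiffOn_infty_iff_deriv_of_isOpen isOpen_Ioi).2
    ⟨fun x hx => (hderiv x hx).differentiableAt.differentiableWithinAt, ?_⟩
  exact (contDiffOn_radial F.smooth_ξ ht).congr fun x hx => (hderiv x hx).deriv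

lemma isWarpingFunction_of_smooth
    (hf : ContDiffOn ℝ (⊤ : ℕ∞) (fun p : ℝ × ℝ => f p.1 p.2) (Ioi 0 ×ˢ Ico 0 F.T))
    (hpos : ∀ x > 0, 0 < f x t) (hf_zero : Tendsto (fun x => f x t) (𝓝[>] 0) (𝓝 0))
    (hf_one : Tendsto (fun x => dS F.ξ f x t) (𝓝[>] 0) (𝓝 1)) (ht : t ∈ Ico 0 F.T) :
    IsWarpingFunction (fun x => F.ξ x t) (fun x => f x t) (fun x => dS F.ξ f x t)
      (fun x => dS F.ξ (dS F.ξ f) x t) := by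
  have hξ : ∀ x > 0, F.ξ x t ≠ 0 := fun x hx => (F.ξ_pos x hx t ht).ne'
  have hf_t := contDiffOn_radial hf ht
  have hf_s := contDiffOn_dS (contDiffOn_radial F.smooth_ξ ht) hξ hf_t
  exact ⟨hpos,
    fun x hx => hasDerivAt_mul_dS (hξ x hx)
      ((hf_t.contDiffAt (Ioi_mem_nhds hx)).differentiableAt (by simp)),
    fun x hx => hasDerivAt_mul_dS (hξ x hx)
      ((hf_s.contDiffAt (Ioi_mem_nhds hx)).differentiableAt (by simp)),
    hf_zero, hf_one⟩

lemma isWarpingFunction_b (ht : t ∈ Ico 0 F.T) :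
    IsWarpingFunction (fun x => F.ξ x t) (fun x => F.b x t) (fun x => F.bS x t)
      (fun x => F.bSS x t) :=
  isWarpingFunction_of_smooth F.smooth_b (fun x hx => F.b_pos x hx t ht) (F.b_origin t ht)
    (F.bs_origin t ht) ht

lemma isWarpingFunction_c (ht : t ∈ Ico 0 F.T) :
    IsWarpingFunction (fun x => F.ξ x t) (fun x => F.c x t) (fun x => F.cS x t)
      (fun x => F.cSS x t) :=
  isWarpingFunction_of_smooth F.smooth_c (fun x hx => F.c_pos x hx t ht) (F.c_origin t ht)
    (F.cs_origin t ht) ht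

lemma laplacian_eq {v₁ : ℝ → ℝ} {v₂ : ℝ} (hx : 0 < x) (ht : t ∈ Ico 0 F.T)
    (hv : ∀ y > 0, HasDerivAt (fun y => v y t) (F.ξ y t * v₁ y) y)
    (hv₁ : HasDerivAt v₁ (F.ξ x t * v₂) x) :
    F.laplacian v x t = v₂ + F.meanH x t * v₁ x := by
  have hξ : ∀ y > 0, F.ξ y t ≠ 0 := fun y hy => (F.ξ_pos y hy t ht).ne'
  have hv_s : (fun y => dS F.ξ v y t) =ᶠ[𝓝 x] v₁ := by
    filter_upwards [Ioi_mem_nhds hx] with y hy using dS_eq_of_hasDerivAt (hξ y hy) (hv y hy)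
  rw [laplacian, hv_s.eq_of_nhds, dS_eq_of_hasDerivAt (hξ x hx) (hv₁.congr_of_eventuallyEq hv_s)]

lemma laplacian_sub (hu : ContDiffOn ℝ (⊤ : ℕ∞) (fun y => u y t) (Ioi 0))
    (hv : ContDiffOn ℝ (⊤ : ℕ∞) (fun y => v y t) (Ioi 0)) (hx : 0 < x) (ht : t ∈ Ico 0 F.T) :
    F.laplacian (fun y τ => u y τ - v y τ) x t = F.laplacian u x t - F.laplacian v x t := by
  have hξ : ∀ y > 0, F.ξ y t ≠ 0 := fun y hy => (F.ξ_pos y hy t ht).ne'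
  have hξ_t := contDiffOn_radial F.smooth_ξ ht
  have hderiv : ∀ {w : ℝ → ℝ → ℝ}, ContDiffOn ℝ (⊤ : ℕ∞) (fun y => w y t) (Ioi 0) →
      ∀ y > 0, HasDerivAt (fun y => w y t) (F.ξ y t * dS F.ξ w y t) y := fun hw y hy =>
    hasDerivAt_mul_dS (hξ y hy) ((hw.contDiffAt (Ioi_mem_nhds hy)).differentiableAt (by simp))
  rw [laplacian_eq hx ht (v₁ := fun y => dS F.ξ u y t - dS F.ξ v y t)
    (v₂ := dS F.ξ (dS F.ξ u) x t - dS F.ξ (dS F.ξ v) x t)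
    (fun y hy => ((hderiv hu y hy).fun_sub (hderiv hv y hy)).congr_deriv (mul_sub _ _ _).symm)
    (((hderiv (contDiffOn_dS hξ_t hξ hu) x hx).fun_sub
      (hderiv (contDiffOn_dS hξ_t hξ hv) x hx)).congr_deriv (mul_sub _ _ _).symm),
    laplacian, laplacian]
  ring

lemma laplacian_nonpos_of_isLocalMax (hx : 0 < x) (ht : t ∈ Ico 0 F.T)
    (hv : ContDiffAt ℝ 2 (fun y => v y t) x) (hmax : IsLocalMax (fun y => v y t) x) :
    F.laplacian v x t ≤ 0 := by
  have hξ : DifferentiableAt ℝ (fun y => F.ξ y t) x :=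
    ((contDiffOn_radial F.smooth_ξ ht).contDiffAt (Ioi_mem_nhds hx)).differentiableAt (by simp)
  have hv_s : dS F.ξ v x t = 0 := by rw [dS, hmax.deriv_eq_zero, mul_zero]
  rw [laplacian, hv_s, mul_zero, add_zero]
  exact dS_dS_nonpos_of_isLocalMax hξ (F.ξ_pos x hx t ht).ne' hv hmax

/-! ### Geometry under a curvature bound -/

/-- The curvature bound `|Rm| ≤ κ²` up to a time `t₀ < T`. The bound is written as a square, so that
`κ` is an inverse length and the comparison estimates involve no square roots. -/
structure HasCurvatureBound (F : WarpedBergerFlow) (κ t₀ : ℝ) : Prop where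
  nonneg : 0 ≤ κ
  lt_T : t₀ < F.T
  RmNorm_le : ∀ x > 0, ∀ t ∈ Icc 0 t₀, F.RmNorm x t ≤ κ ^ 2

lemma RmNorm_nonneg (F : WarpedBergerFlow) (x t : ℝ) : 0 ≤ F.RmNorm x t := by
  unfold RmNorm
  positivity

lemma abs_k01_le_RmNorm (F : WarpedBergerFlow) (x t : ℝ) : |F.k01 x t| ≤ F.RmNorm x t := by
  unfold RmNorm
  linarith [abs_nonneg (F.k12 x t), abs_nonneg (F.k13 x t), abs_nonneg (F.k03 x t)]

lemma abs_k03_le_RmNorm (F : WarpedBergerFlow) (x t : ℝ) : |F.k03 x t| ≤ F.RmNorm x t := by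
  unfold RmNorm
  linarith [abs_nonneg (F.k12 x t), abs_nonneg (F.k13 x t), abs_nonneg (F.k01 x t)]

lemma abs_two_mul_k01_add_k03_le_RmNorm (F : WarpedBergerFlow) (x t : ℝ) :
    |2 * F.k01 x t + F.k03 x t| ≤ 2 * F.RmNorm x t := by
  have htri := abs_add_le (2 * F.k01 x t) (F.k03 x t)
  rw [abs_mul, abs_two] at htri
  unfold RmNorm
  linarith [abs_nonneg (F.k12 x t), abs_nonneg (F.k13 x t), abs_nonneg (F.k03 x t)]

lemma BoundedCurvature.exists_hasCurvatureBound (hF : F.BoundedCurvature) {t₀ : ℝ}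
    (ht₀ : t₀ ∈ Ico 0 F.T) : ∃ κ, F.HasCurvatureBound κ t₀ := by
  obtain ⟨C, hC⟩ := hF t₀ ht₀
  have hC_nonneg : 0 ≤ C := (F.RmNorm_nonneg 1 0).trans (hC 1 one_pos 0 ⟨le_rfl, ht₀.1⟩)
  refine ⟨√C, Real.sqrt_nonneg C, ht₀.2, ?_⟩
  rwa [Real.sq_sqrt hC_nonneg]

namespace HasCurvatureBound

variable {κ t₀ τ : ℝ} (h : F.HasCurvatureBound κ t₀)
include h

lemma mem_Ico (ht : t ∈ Icc 0 t₀) : t ∈ Ico 0 F.T := ⟨ht.1, ht.2.trans_lt h.lt_T⟩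

lemma abs_bSS_le (hx : 0 < x) (ht : t ∈ Icc 0 t₀) : |F.bSS x t| ≤ κ ^ 2 * F.b x t := by
  have hb := F.b_pos x hx t (h.mem_Ico ht)
  have hk := (F.abs_k01_le_RmNorm x t).trans (h.RmNorm_le x hx t ht)
  rwa [k01, abs_div, abs_neg, abs_of_pos hb, div_le_iff₀ hb] at hk

lemma abs_cSS_le (hx : 0 < x) (ht : t ∈ Icc 0 t₀) : |F.cSS x t| ≤ κ ^ 2 * F.c x t := by
  have hc := F.c_pos x hx t (h.mem_Ico ht)
  have hk := (F.abs_k03_le_RmNorm x t).trans (h.RmNorm_le x hx t ht)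
  rwa [k03, abs_div, abs_neg, abs_of_pos hc, div_le_iff₀ hc] at hk

lemma abs_log_div_le (hx : 0 < x) (ht : t ∈ Icc 0 t₀) :
    |Real.log (F.c x t / F.b x t)| ≤ κ ^ 2 * F.arclength x t ^ 2 + κ * F.arclength x t := by
  have hs := isArclength (h.mem_Ico ht)
  have hb := isWarpingFunction_b (h.mem_Ico ht)
  have hc := isWarpingFunction_c (h.mem_Ico ht)
  have hbSS : ∀ y > 0, |F.bSS y t| ≤ κ ^ 2 * F.b y t := fun y hy => h.abs_bSS_le hy ht
  have hcSS : ∀ y > 0, |F.cSS y t| ≤ κ ^ 2 * F.c y t := fun y hy => h.abs_cSS_le hy ht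
  have hcb := hc.log_div_le hs hb h.nonneg hx (fun y hy => (abs_le.1 (hcSS y hy)).2) hbSS
  have hbc := hb.log_div_le hs hc h.nonneg hx (fun y hy => (abs_le.1 (hbSS y hy)).2) hcSS
  rw [← inv_div, Real.log_inv] at hbc
  exact abs_le'.2 ⟨hcb, hbc⟩

lemma meanH_le (hx : 0 < x) (ht : t ∈ Icc 0 t₀) :
    F.meanH x t ≤ 3 * (1 / F.arclength x t + κ ^ 2 * F.arclength x t) := by
  have hs := isArclength (h.mem_Ico ht)
  have hb := (isWarpingFunction_b (h.mem_Ico ht)).div_le_inv_add_mul hs (sq_nonneg κ) hx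
    fun y hy => (abs_le.1 (h.abs_bSS_le hy ht)).2
  have hc := (isWarpingFunction_c (h.mem_Ico ht)).div_le_inv_add_mul hs (sq_nonneg κ) hx
    fun y hy => (abs_le.1 (h.abs_cSS_le hy ht)).2
  rw [meanH, mul_div_assoc]
  linarith

lemma abs_deriv_ξ_le (hx : 0 < x) (ht : t ∈ Icc 0 t₀) :
    |deriv (fun u => F.ξ x u) t| ≤ 2 * κ ^ 2 * F.ξ x t := by
  have hξ := F.ξ_pos x hx t (h.mem_Ico ht)
  have hflow : deriv (fun u => F.ξ x u) t = (2 * F.k01 x t + F.k03 x t) * F.ξ x t := by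
    rw [F.eq_ξ x hx t (h.mem_Ico ht), k01, k03, bSS, cSS]
    ring
  rw [hflow, abs_mul, abs_of_pos hξ]
  gcongr
  exact (F.abs_two_mul_k01_add_k03_le_RmNorm x t).trans (by gcongr; exact h.RmNorm_le x hx t ht)

lemma ξ_le_exp_mul (hx : 0 < x) (ht : t ∈ Icc 0 t₀) (hτ : τ ∈ Icc 0 t₀) :
    F.ξ x τ ≤ Real.exp (2 * κ ^ 2 * |τ - t|) * F.ξ x t := by
  have hsmooth := contDiffOn_time F.smooth_ξ hx
  refine le_exp_mul_of_abs_deriv_le (hsmooth.continuousOn.mono fun u hu => h.mem_Ico hu)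
    ((hsmooth.differentiableOn (by simp)).mono fun u hu => h.mem_Ico (Ioo_subset_Icc_self hu))
    (fun u hu => F.ξ_pos x hx u (h.mem_Ico hu))
    (fun u hu => h.abs_deriv_ξ_le hx (Ioo_subset_Icc_self hu)) ht hτ

lemma arclength_le_exp_mul (hx : 0 < x) (ht : t ∈ Icc 0 t₀) (hτ : τ ∈ Icc 0 t₀) :
    F.arclength x τ ≤ Real.exp (2 * κ ^ 2 * |τ - t|) * F.arclength x t := by
  have hint : ∀ u ∈ Icc 0 t₀, IntervalIntegrable (fun y => F.ξ y u) volume 0 x := fun u hu =>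
    intervalIntegral.intervalIntegrable_of_integral_ne_zero (arclength_pos hx (h.mem_Ico hu)).ne'
  unfold arclength
  rw [← intervalIntegral.integral_const_mul]
  exact intervalIntegral.integral_mono_on_of_le_Ioo hx.le (hint τ hτ) ((hint t ht).const_mul _)
    fun y hy => h.ξ_le_exp_mul hy.1 ht hτ

lemma exp_neg_mul_arclength_le (hx : 0 < x) (ht : t ∈ Icc 0 t₀) (hτ : τ ∈ Icc 0 t₀) :
    Real.exp (-(2 * κ ^ 2) * |τ - t|) * F.arclength x t ≤ F.arclength x τ := by
  rw [neg_mul, Real.exp_neg, inv_mul_le_iff₀ (Real.exp_pos _), abs_sub_comm]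
  exact h.arclength_le_exp_mul hx hτ ht

lemma continuousOn_arclength :
    ContinuousOn (fun p : ℝ × ℝ => F.arclength p.1 p.2) (Ioi 0 ×ˢ Icc 0 t₀) := by
  rintro ⟨x, t⟩ ⟨hx, ht⟩
  have hspace : ContinuousAt (fun p : ℝ × ℝ => F.arclength p.1 t) (x, t) :=
    ContinuousAt.comp (f := Prod.fst) (x := (x, t))
      ((isArclength (h.mem_Ico ht)).hasDerivAt x hx).continuousAt continuousAt_fst
  have hexp : ∀ K : ℝ, Tendsto (fun p : ℝ × ℝ => Real.exp (K * |p.2 - t|) * F.arclength p.1 t)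
      (𝓝[Ioi 0 ×ˢ Icc 0 t₀] (x, t)) (𝓝 (F.arclength x t)) := by
    intro K
    have hcont : ContinuousAt (fun p : ℝ × ℝ =>
        Real.exp (K * |p.2 - t|) * F.arclength p.1 t) (x, t) := by fun_prop
    simpa using hcont.continuousWithinAt.tendsto
  refine tendsto_of_tendsto_of_tendsto_of_le_of_le' (hexp (-(2 * κ ^ 2))) (hexp (2 * κ ^ 2)) ?_ ?_
  · filter_upwards [self_mem_nhdsWithin] with p hp using h.exp_neg_mul_arclength_le hp.1 ht hp.2
  · filter_upwards [self_mem_nhdsWithin] with p hp using h.arclength_le_exp_mul hp.1 ht hp.2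

/-- One interval serves all times because arclengths at different times are comparable. -/
lemma exists_mem_Icc_of_arclength (h₀ : 0 ≤ t₀) {a : ℝ} (ha : 0 < a) (B : ℝ) :
    ∃ r > 0, ∃ R, ∀ x > 0, ∀ t ∈ Icc 0 t₀,
      a ≤ F.arclength x t → F.arclength x t ≤ B → x ∈ Icc r R := by
  have hs := isArclength F.zero_mem_Ico
  have hzero : (0 : ℝ) ∈ Icc 0 t₀ := left_mem_Icc.2 h₀
  have hexp : ∀ t ∈ Icc 0 t₀, ∀ y ≥ 0,
      Real.exp (2 * κ ^ 2 * |t|) * y ≤ Real.exp (2 * κ ^ 2 * t₀) * y := by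
    intro t ht y hy
    rw [abs_of_nonneg ht.1]
    gcongr
    exact ht.2
  obtain ⟨r, hr, hr_pos⟩ := ((hs.tendsto_zero.eventually_lt_const
    (div_pos ha (Real.exp_pos (2 * κ ^ 2 * t₀)))).and self_mem_nhdsWithin).exists
  obtain ⟨R, hR, hR_pos⟩ := ((hs.tendsto_atTop.eventually_gt_atTop
    (Real.exp (2 * κ ^ 2 * t₀) * B)).and (eventually_gt_atTop 0)).exists
  refine ⟨r, hr_pos, R, fun x hx t ht hax hxB => ⟨?_, ?_⟩⟩
  · by_contra! hxr
    have hle : F.arclength x t ≤ Real.exp (2 * κ ^ 2 * t₀) * F.arclength x 0 := by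
      refine le_trans ?_ (hexp t ht _ (hs.pos hx).le)
      simpa using h.arclength_le_exp_mul hx hzero ht
    have hxr' := hs.strictMonoOn hx hr_pos hxr
    rw [lt_div_iff₀ (Real.exp_pos _)] at hr
    nlinarith [Real.exp_pos (2 * κ ^ 2 * t₀)]
  · by_contra! hRx
    have hle : F.arclength x 0 ≤ Real.exp (2 * κ ^ 2 * t₀) * F.arclength x t := by
      refine le_trans ?_ (hexp t ht _ (arclength_pos hx (h.mem_Ico ht)).le)
      simpa using h.arclength_le_exp_mul hx ht hzero
    have hRx' := hs.strictMonoOn hR_pos hx hRx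
    nlinarith [Real.exp_pos (2 * κ ^ 2 * t₀)]

end HasCurvatureBound

/-! ### The maximum principle -/

variable (F) in
/-- The barrier `δ e^{At} (1 + s⁴)` of the maximum principle. The growth rate `A = 20 κ² + 13` is
large enough to absorb both its Laplacian and the variation of the arclength under `|Rm| ≤ κ²`. -/
def barrier (δ κ x t : ℝ) : ℝ :=
  δ * (Real.exp ((20 * κ ^ 2 + 13) * t) * (1 + F.arclength x t ^ 4))

section Barrier

variable {δ κ t₀ τ : ℝ}

lemma contDiffOn_barrier (ht : t ∈ Ico 0 F.T) :
    ContDiffOn ℝ (⊤ : ℕ∞) (fun y => F.barrier δ κ y t) (Ioi 0) :=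
  contDiffOn_const.mul (contDiffOn_const.mul
    (contDiffOn_const.add ((contDiffOn_arclength ht).pow 4)))

lemma laplacian_barrier (hx : 0 < x) (ht : t ∈ Ico 0 F.T) :
    F.laplacian (F.barrier δ κ) x t = δ * (Real.exp ((20 * κ ^ 2 + 13) * t) *
      (12 * F.arclength x t ^ 2 + 4 * F.arclength x t ^ 3 * F.meanH x t)) := by
  have hs := (isArclength ht).hasDerivAt
  have hbarrier : ∀ y > 0, HasDerivAt (fun y => F.barrier δ κ y t)
      (F.ξ y t * (δ * Real.exp ((20 * κ ^ 2 + 13) * t) * (4 * F.arclength y t ^ 3))) y := by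
    intro y hy
    refine (((((hs y hy).fun_pow 4).const_add 1).const_mul
      (Real.exp ((20 * κ ^ 2 + 13) * t))).const_mul δ).congr_deriv ?_
    push_cast
    ring
  have hbarrier_s : HasDerivAt
      (fun y => δ * Real.exp ((20 * κ ^ 2 + 13) * t) * (4 * F.arclength y t ^ 3))
      (F.ξ x t * (δ * Real.exp ((20 * κ ^ 2 + 13) * t) * (12 * F.arclength x t ^ 2))) x := by
    refine ((((hs x hx).fun_pow 3).const_mul 4).const_mul _).congr_deriv ?_
    push_cast
    ring
  rw [laplacian_eq hx ht hbarrier hbarrier_s]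
  ring

namespace HasCurvatureBound

lemma laplacian_barrier_lt (h : F.HasCurvatureBound κ t₀) (hδ : 0 < δ) (hx : 0 < x)
    (ht : t ∈ Icc 0 t₀) :
    F.laplacian (F.barrier δ κ) x t < δ * (Real.exp ((20 * κ ^ 2 + 13) * t) *
      ((20 * κ ^ 2 + 13) * (1 + F.arclength x t ^ 4) - 8 * κ ^ 2 * F.arclength x t ^ 4)) := by
  rw [laplacian_barrier hx (h.mem_Ico ht)]
  have hH := h.meanH_le hx ht
  have hs := arclength_pos hx (h.mem_Ico ht)
  gcongr
  set s := F.arclength x t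
  calc 12 * s ^ 2 + 4 * s ^ 3 * F.meanH x t
      ≤ 12 * s ^ 2 + 4 * s ^ 3 * (3 * (1 / s + κ ^ 2 * s)) := by gcongr
    _ = 24 * s ^ 2 + 12 * κ ^ 2 * s ^ 4 := by field_simp; ring
    _ ≤ 12 * (1 + s ^ 4) + 12 * κ ^ 2 * s ^ 4 := by linarith [sq_nonneg (s ^ 2 - 1)]
    _ < (20 * κ ^ 2 + 13) * (1 + s ^ 4) - 8 * κ ^ 2 * s ^ 4 := by
      linarith [sq_nonneg κ, pow_pos hs 4]

lemma barrier_le (h : F.HasCurvatureBound κ t₀) (hδ : 0 ≤ δ) (hx : 0 < x) (hτ : 0 ≤ τ)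
    (hτt : τ ≤ t) (ht : t ≤ t₀) :
    F.barrier δ κ x τ ≤ δ * (Real.exp ((20 * κ ^ 2 + 13) * τ) *
      (1 + F.arclength x t ^ 4 * Real.exp (8 * κ ^ 2 * (t - τ)))) := by
  have hs : F.arclength x τ ^ 4 ≤ F.arclength x t ^ 4 * Real.exp (8 * κ ^ 2 * (t - τ)) :=
    calc F.arclength x τ ^ 4
        ≤ (Real.exp (2 * κ ^ 2 * |τ - t|) * F.arclength x t) ^ 4 := by
          gcongr
          · exact (arclength_pos hx (h.mem_Ico ⟨hτ, hτt.trans ht⟩)).le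
          · exact h.arclength_le_exp_mul hx ⟨hτ.trans hτt, ht⟩ ⟨hτ, hτt.trans ht⟩
      _ = F.arclength x t ^ 4 * Real.exp (8 * κ ^ 2 * (t - τ)) := by
          rw [mul_pow, ← Real.exp_nat_mul, abs_of_nonpos (sub_nonpos.2 hτt), mul_comm]
          congr 2
          push_cast
          ring
  unfold barrier
  gcongr

/-- Since no time derivative of the arclength is at hand, the barrier is replaced by the smooth
majorant of `barrier_le`, which touches it at time `t`. -/
lemma mul_le_deriv_of_sub_barrier_le (h : F.HasCurvatureBound κ t₀) (hδ : 0 ≤ δ) (hx : 0 < x)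
    (ht : t ∈ Ioc 0 t₀) (hv : DifferentiableAt ℝ (fun τ => v x τ) t)
    (hmax : ∀ τ ∈ Ioo 0 t, v x τ - F.barrier δ κ x τ ≤ v x t - F.barrier δ κ x t) :
    δ * (Real.exp ((20 * κ ^ 2 + 13) * t) *
      ((20 * κ ^ 2 + 13) * (1 + F.arclength x t ^ 4) - 8 * κ ^ 2 * F.arclength x t ^ 4))
      ≤ deriv (fun τ => v x τ) t := by
  have hexp : HasDerivAt (fun τ => Real.exp (8 * κ ^ 2 * (t - τ))) (-(8 * κ ^ 2)) t := by
    refine (((hasDerivAt_id' t).const_sub t).const_mul (8 * κ ^ 2)).exp.congr_deriv ?_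
    simp
  have hderiv : HasDerivAt (fun τ => v x τ - δ * (Real.exp ((20 * κ ^ 2 + 13) * τ) *
      (1 + F.arclength x t ^ 4 * Real.exp (8 * κ ^ 2 * (t - τ)))))
      (deriv (fun τ => v x τ) t - δ * (Real.exp ((20 * κ ^ 2 + 13) * t) *
        ((20 * κ ^ 2 + 13) * (1 + F.arclength x t ^ 4) - 8 * κ ^ 2 * F.arclength x t ^ 4))) t := by
    refine (hv.hasDerivAt.fun_sub ((((hasDerivAt_id' t).const_mul _).exp.fun_mul
      ((hexp.const_mul _).const_add 1)).const_mul δ)).congr_deriv ?_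
    simp only [sub_self, mul_zero, Real.exp_zero]
    ring
  refine sub_nonneg.1 (nonneg_of_hasDerivAt_of_eventually_le hderiv ?_)
  filter_upwards [Ioo_mem_nhdsLT ht.1] with τ hτ
  have hbarrier := h.barrier_le hδ hx hτ.1.le hτ.2.le ht.2
  have hmax_τ := hmax τ hτ
  simp only [barrier, sub_self, mul_zero, Real.exp_zero, mul_one] at hbarrier hmax_τ ⊢
  linarith

lemma laplacian_lt_deriv_of_isMaxOn (h : F.HasCurvatureBound κ t₀) (hδ : 0 < δ)
    (hv : ContDiffOn ℝ (⊤ : ℕ∞) (fun p : ℝ × ℝ => v p.1 p.2) (Ioi 0 ×ˢ Ico 0 F.T)) (hx : 0 < x)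
    (ht : t ∈ Ioc 0 t₀)
    (hmax : IsMaxOn (fun p : ℝ × ℝ => v p.1 p.2 - F.barrier δ κ p.1 p.2) (Ioi 0 ×ˢ Icc 0 t₀)
      (x, t)) :
    F.laplacian v x t < deriv (fun τ => v x τ) t := by
  have ht_Icc : t ∈ Icc 0 t₀ := Ioc_subset_Icc_self ht
  have ht_Ico := h.mem_Ico ht_Icc
  have hspace : IsLocalMax (fun y => v y t - F.barrier δ κ y t) x := by
    filter_upwards [Ioi_mem_nhds hx] with y hy using hmax (mk_mem_prod hy ht_Icc)
  have hsmooth := (contDiffOn_radial hv ht_Ico).sub (contDiffOn_barrier (δ := δ) (κ := κ) ht_Ico)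
  have hlaplacian := laplacian_nonpos_of_isLocalMax
    (v := fun y τ => v y τ - F.barrier δ κ y τ) hx ht_Ico
    (contDiffAt_infty.1 (hsmooth.contDiffAt (Ioi_mem_nhds hx)) 2) hspace
  rw [laplacian_sub (contDiffOn_radial hv ht_Ico) (contDiffOn_barrier ht_Ico) hx ht_Ico,
    sub_nonpos] at hlaplacian
  exact (hlaplacian.trans_lt (h.laplacian_barrier_lt hδ hx ht_Icc)).trans_le
    (h.mul_le_deriv_of_sub_barrier_le hδ.le hx ht (differentiableAt_time hv hx ⟨ht.1, ht_Ico.2⟩)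
      fun τ hτ => hmax (mk_mem_prod hx ⟨hτ.1.le, hτ.2.le.trans ht.2⟩))

lemma exists_mem_Icc_of_barrier_lt (h : F.HasCurvatureBound κ t₀) (h₀ : 0 ≤ t₀) (hδ : 0 < δ)
    {K : ℝ} (hK : 0 ≤ K)
    (hv : ∀ x > 0, ∀ t ∈ Icc 0 t₀, v x t ≤ K * (F.arclength x t ^ 2 + F.arclength x t)) :
    ∃ r > 0, ∃ R, ∀ x > 0, ∀ t ∈ Icc 0 t₀, F.barrier δ κ x t < v x t → x ∈ Icc r R := by
  obtain ⟨a, ha, B, hB⟩ := exists_bounds_of_quartic_lt_quadratic hδ hK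
  obtain ⟨r, hr, R, hR⟩ := h.exists_mem_Icc_of_arclength h₀ ha B
  refine ⟨r, hr, R, fun x hx t ht hlt => ?_⟩
  have hexp : 1 ≤ Real.exp ((20 * κ ^ 2 + 13) * t) :=
    Real.one_le_exp (mul_nonneg (by positivity) ht.1)
  have hquartic : δ * (1 + F.arclength x t ^ 4) ≤ F.barrier δ κ x t := by
    unfold barrier
    gcongr
    exact le_mul_of_one_le_left (by positivity) hexp
  have hbounds := hB _ (arclength_pos hx (h.mem_Ico ht)) ((hquartic.trans_lt hlt).trans_le
    (hv x hx t ht))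
  exact hR x hx t ht hbounds.1 hbounds.2

lemma continuousOn_barrier (h : F.HasCurvatureBound κ t₀) :
    ContinuousOn (fun p : ℝ × ℝ => F.barrier δ κ p.1 p.2) (Ioi 0 ×ˢ Icc 0 t₀) := by
  have hs := h.continuousOn_arclength
  unfold barrier
  fun_prop

lemma le_barrier (h : F.HasCurvatureBound κ t₀) (hδ : 0 < δ)
    (hv : ContDiffOn ℝ (⊤ : ℕ∞) (fun p : ℝ × ℝ => v p.1 p.2) (Ioi 0 ×ˢ Ico 0 F.T))
    (hsub : ∀ x > 0, ∀ t ∈ Ioc 0 t₀, 0 < v x t → deriv (fun τ => v x τ) t ≤ F.laplacian v x t)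
    (hinit : ∀ x > 0, v x 0 ≤ 0) {K : ℝ} (hK : 0 ≤ K)
    (hgrowth : ∀ x > 0, ∀ t ∈ Icc 0 t₀, v x t ≤ K * (F.arclength x t ^ 2 + F.arclength x t))
    (hx : 0 < x) (ht : t ∈ Icc 0 t₀) : v x t ≤ F.barrier δ κ x t := by
  by_contra! hlt
  obtain ⟨r, hr, R, hrR⟩ := h.exists_mem_Icc_of_barrier_lt (ht.1.trans ht.2) hδ hK hgrowth
  have hsubset : Icc r R ×ˢ Icc 0 t₀ ⊆ Ioi 0 ×ˢ Icc 0 t₀ :=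
    prod_mono_left fun y hy => hr.trans_le hy.1
  have hcont : ContinuousOn (fun p : ℝ × ℝ => v p.1 p.2 - F.barrier δ κ p.1 p.2)
      (Ioi 0 ×ˢ Icc 0 t₀) :=
    (hv.continuousOn.mono (prod_mono_right fun τ hτ => h.mem_Ico hτ)).sub h.continuousOn_barrier
  obtain ⟨⟨y, τ⟩, ⟨hy, hτ⟩, hpos, hmax⟩ := exists_isMaxOn_of_superlevel_subset
    (isCompact_Icc.prod isCompact_Icc) hsubset (hcont.mono hsubset)
    (fun p hp hp_pos => ⟨hrR p.1 hp.1 p.2 hp.2 (sub_pos.1 hp_pos), hp.2⟩)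
    (mk_mem_prod hx ht) (sub_pos.2 hlt)
  have hbarrier : 0 ≤ F.barrier δ κ y τ := by
    unfold barrier
    positivity
  have hvy : 0 < v y τ := hbarrier.trans_lt (sub_pos.1 hpos)
  have hτ_pos : 0 < τ := hτ.1.lt_of_ne (by rintro rfl; exact (hinit y hy).not_gt hvy)
  exact (h.laplacian_lt_deriv_of_isMaxOn hδ hv hy ⟨hτ_pos, hτ.2⟩ hmax).not_ge
    (hsub y hy τ ⟨hτ_pos, hτ.2⟩ hvy)

theorem nonpos_of_subsolution (h : F.HasCurvatureBound κ t₀)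
    (hv : ContDiffOn ℝ (⊤ : ℕ∞) (fun p : ℝ × ℝ => v p.1 p.2) (Ioi 0 ×ˢ Ico 0 F.T))
    (hsub : ∀ x > 0, ∀ t ∈ Ioc 0 t₀, 0 < v x t → deriv (fun τ => v x τ) t ≤ F.laplacian v x t)
    (hinit : ∀ x > 0, v x 0 ≤ 0) {K : ℝ} (hK : 0 ≤ K)
    (hgrowth : ∀ x > 0, ∀ t ∈ Icc 0 t₀, v x t ≤ K * (F.arclength x t ^ 2 + F.arclength x t))
    (hx : 0 < x) (ht : t ∈ Icc 0 t₀) : v x t ≤ 0 := by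
  have hlim : Tendsto (fun δ => F.barrier δ κ x t) (𝓝[>] 0) (𝓝 0) := by
    have hcont : Continuous fun δ => F.barrier δ κ x t := continuous_id.mul continuous_const
    simpa [barrier] using (hcont.tendsto 0).mono_left nhdsWithin_le_nhds
  refine ge_of_tendsto hlim ?_
  filter_upwards [self_mem_nhdsWithin] with δ hδ
  exact h.le_barrier hδ hv hsub hinit hK hgrowth hx ht

end HasCurvatureBound

end Barrier

/-! ### Evolution of the ratio `c/b` -/

variable (F) in
/-- The logarithm `log (c/b)` of the ratio of the two warping functions. -/
def logRatio (x t : ℝ) : ℝ := Real.log (F.c x t / F.b x t)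

lemma logRatio_eq_sub (hx : 0 < x) (ht : t ∈ Ico 0 F.T) :
    F.logRatio x t = Real.log (F.c x t) - Real.log (F.b x t) :=
  Real.log_div (F.c_pos x hx t ht).ne' (F.b_pos x hx t ht).ne'

lemma contDiffOn_logRatio :
    ContDiffOn ℝ (⊤ : ℕ∞) (fun p : ℝ × ℝ => F.logRatio p.1 p.2) (Ioi 0 ×ˢ Ico 0 F.T) :=
  (F.smooth_c.div F.smooth_b fun p hp => (F.b_pos p.1 hp.1 p.2 hp.2).ne').log fun p hp =>
    (div_pos (F.c_pos p.1 hp.1 p.2 hp.2) (F.b_pos p.1 hp.1 p.2 hp.2)).ne'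

lemma laplacian_logRatio (hx : 0 < x) (ht : t ∈ Ico 0 F.T) :
    F.laplacian F.logRatio x t =
      (F.cSS x t / F.c x t - (F.cS x t / F.c x t) ^ 2)
        - (F.bSS x t / F.b x t - (F.bS x t / F.b x t) ^ 2)
        + F.meanH x t * (F.cS x t / F.c x t - F.bS x t / F.b x t) := by
  have hb : ∀ y > 0, F.b y t ≠ 0 := fun y hy => (F.b_pos y hy t ht).ne'
  have hc : ∀ y > 0, F.c y t ≠ 0 := fun y hy => (F.c_pos y hy t ht).ne'
  have hb_warp := isWarpingFunction_b ht
  have hc_warp := isWarpingFunction_c ht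
  refine laplacian_eq (v₁ := fun y => F.cS y t / F.c y t - F.bS y t / F.b y t) hx ht ?_ ?_
  · intro y hy
    have hlog := ((hc_warp.hasDerivAt y hy).log (hc y hy)).sub
      ((hb_warp.hasDerivAt y hy).log (hb y hy))
    refine (hlog.congr_deriv (by ring)).congr_of_eventuallyEq ?_
    filter_upwards [Ioi_mem_nhds hy] with z hz using logRatio_eq_sub hz ht
  · refine (((hc_warp.hasDerivAt_fst x hx).div (hc_warp.hasDerivAt x hx) (hc x hx)).sub
      ((hb_warp.hasDerivAt_fst x hx).div (hb_warp.hasDerivAt x hx) (hb x hx))).congr_deriv ?_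
    have hbx := hb x hx
    have hcx := hc x hx
    field_simp

lemma deriv_logRatio (hx : 0 < x) (ht : t ∈ Ioo 0 F.T) :
    deriv (fun τ => F.logRatio x τ) t =
      F.laplacian F.logRatio x t + 4 * (F.b x t ^ 2 - F.c x t ^ 2) / F.b x t ^ 4 := by
  have ht_Ico := Ioo_subset_Ico_self ht
  have hb := (F.b_pos x hx t ht_Ico).ne'
  have hc := (F.c_pos x hx t ht_Ico).ne'
  have hb_t := F.eq_b x hx t ht_Ico
  have hc_t := F.eq_c x hx t ht_Ico
  have hlog : (fun τ => F.logRatio x τ) =ᶠ[𝓝 t]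
      fun τ => Real.log (F.c x τ) - Real.log (F.b x τ) := by
    filter_upwards [Ico_mem_nhds ht.1 ht.2] with τ hτ using logRatio_eq_sub hx hτ
  rw [hlog.deriv_eq, (((differentiableAt_time F.smooth_c hx ht).hasDerivAt.log hc).fun_sub
    ((differentiableAt_time F.smooth_b hx ht).hasDerivAt.log hb)).deriv, hb_t, hc_t,
    laplacian_logRatio hx ht_Ico, meanH, bS, cS, bSS, cSS]
  field_simp
  ring

lemma laplacian_sub_const (a : ℝ) :
    F.laplacian (fun y τ => v y τ - a) x t = F.laplacian v x t := by
  simp only [laplacian, dS, deriv_sub_const]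

lemma laplacian_const_sub (a : ℝ) :
    F.laplacian (fun y τ => a - v y τ) x t = -F.laplacian v x t := by
  simp only [laplacian, dS, deriv_const_sub, mul_neg, deriv.fun_neg]
  ring

lemma logRatio_nonneg_iff (hx : 0 < x) (ht : t ∈ Ico 0 F.T) :
    0 ≤ F.logRatio x t ↔ F.b x t ≤ F.c x t := by
  have hb := F.b_pos x hx t ht
  rw [logRatio, Real.log_nonneg_iff (div_pos (F.c_pos x hx t ht) hb), one_le_div hb]

lemma logRatio_nonpos_iff (hx : 0 < x) (ht : t ∈ Ico 0 F.T) :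
    F.logRatio x t ≤ 0 ↔ F.c x t ≤ F.b x t := by
  have hb := F.b_pos x hx t ht
  rw [logRatio, Real.log_nonpos_iff (div_pos (F.c_pos x hx t ht) hb).le, div_le_one hb]

lemma deriv_logRatio_le_laplacian (hx : 0 < x) (ht : t ∈ Ioo 0 F.T) (hφ : 0 ≤ F.logRatio x t) :
    deriv (fun τ => F.logRatio x τ) t ≤ F.laplacian F.logRatio x t := by
  have ht_Ico := Ioo_subset_Ico_self ht
  have hbc : F.b x t ≤ F.c x t := (logRatio_nonneg_iff hx ht_Ico).1 hφ
  have hb := F.b_pos x hx t ht_Ico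
  rw [deriv_logRatio hx ht, add_le_iff_nonpos_right]
  exact div_nonpos_of_nonpos_of_nonneg (by nlinarith) (by positivity)

lemma laplacian_le_deriv_logRatio (hx : 0 < x) (ht : t ∈ Ioo 0 F.T) (hφ : F.logRatio x t ≤ 0) :
    F.laplacian F.logRatio x t ≤ deriv (fun τ => F.logRatio x τ) t := by
  have ht_Ico := Ioo_subset_Ico_self ht
  have hcb : F.c x t ≤ F.b x t := (logRatio_nonpos_iff hx ht_Ico).1 hφ
  have hc := F.c_pos x hx t ht_Ico
  rw [deriv_logRatio hx ht, le_add_iff_nonneg_right]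
  exact div_nonneg (by nlinarith) (by positivity)

namespace HasCurvatureBound

variable {κ t₀ a : ℝ}

lemma abs_logRatio_le (h : F.HasCurvatureBound κ t₀) (hx : 0 < x) (ht : t ∈ Icc 0 t₀) :
    |F.logRatio x t| ≤ (κ ^ 2 + κ) * (F.arclength x t ^ 2 + F.arclength x t) := by
  have hs := arclength_pos hx (h.mem_Ico ht)
  have hκ := h.nonneg
  refine (h.abs_log_div_le hx ht).trans (sub_nonneg.1 ?_)
  ring_nf
  positivity

lemma logRatio_le_of_init (h : F.HasCurvatureBound κ t₀) (ha : 0 ≤ a)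
    (hinit : ∀ x > 0, F.logRatio x 0 ≤ a) (hx : 0 < x) (ht : t ∈ Icc 0 t₀) :
    F.logRatio x t ≤ a := by
  have hκ := h.nonneg
  refine sub_nonpos.1 (h.nonpos_of_subsolution (v := fun y τ => F.logRatio y τ - a)
    (contDiffOn_logRatio.sub contDiffOn_const) (fun y hy τ hτ hpos => ?_)
    (fun y hy => sub_nonpos.2 (hinit y hy)) (K := κ ^ 2 + κ) (by positivity)
    (fun y hy τ hτ => ?_) hx ht)
  · rw [laplacian_sub_const, deriv_sub_const]
    exact deriv_logRatio_le_laplacian hy ⟨hτ.1, (h.mem_Ico (Ioc_subset_Icc_self hτ)).2⟩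
      (ha.trans (sub_pos.1 hpos).le)
  · linarith [(abs_le.1 (h.abs_logRatio_le hy hτ)).2]

lemma le_logRatio_of_init (h : F.HasCurvatureBound κ t₀) (ha : a ≤ 0)
    (hinit : ∀ x > 0, a ≤ F.logRatio x 0) (hx : 0 < x) (ht : t ∈ Icc 0 t₀) :
    a ≤ F.logRatio x t := by
  have hκ := h.nonneg
  refine sub_nonpos.1 (h.nonpos_of_subsolution (v := fun y τ => a - F.logRatio y τ)
    (contDiffOn_const.sub contDiffOn_logRatio) (fun y hy τ hτ hpos => ?_)
    (fun y hy => sub_nonpos.2 (hinit y hy)) (K := κ ^ 2 + κ) (by positivity)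
    (fun y hy τ hτ => ?_) hx ht)
  · rw [laplacian_const_sub, deriv_const_sub, neg_le_neg_iff]
    exact laplacian_le_deriv_logRatio hy ⟨hτ.1, (h.mem_Ico (Ioc_subset_Icc_self hτ)).2⟩
      ((sub_pos.1 hpos).le.trans ha)
  · linarith [(abs_le.1 (h.abs_logRatio_le hy hτ)).1]

end HasCurvatureBound

namespace BoundedCurvature

variable {r : ℝ}

theorem div_le_of_init (hF : F.BoundedCurvature) (hr : 1 ≤ r)
    (hinit : ∀ x > 0, F.c x 0 / F.b x 0 ≤ r) (hx : 0 < x) (ht : t ∈ Ico 0 F.T) :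
    F.c x t / F.b x t ≤ r := by
  obtain ⟨κ, h⟩ := hF.exists_hasCurvatureBound ht
  have hpos : ∀ y > 0, ∀ τ ∈ Ico 0 F.T, 0 < F.c y τ / F.b y τ := fun y hy τ hτ =>
    div_pos (F.c_pos y hy τ hτ) (F.b_pos y hy τ hτ)
  exact (Real.log_le_log_iff (hpos x hx t ht) (one_pos.trans_le hr)).1
    (h.logRatio_le_of_init (Real.log_nonneg hr)
      (fun y hy => Real.log_le_log (hpos y hy 0 F.zero_mem_Ico) (hinit y hy)) hx ⟨ht.1, le_rfl⟩)

theorem le_div_of_init (hF : F.BoundedCurvature) (hr : r ≤ 1)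
    (hinit : ∀ x > 0, r ≤ F.c x 0 / F.b x 0) (hx : 0 < x) (ht : t ∈ Ico 0 F.T) :
    r ≤ F.c x t / F.b x t := by
  have hpos : 0 < F.c x t / F.b x t := div_pos (F.c_pos x hx t ht) (F.b_pos x hx t ht)
  rcases le_or_gt r 0 with hr₀ | hr₀
  · exact hr₀.trans hpos.le
  obtain ⟨κ, h⟩ := hF.exists_hasCurvatureBound ht
  exact (Real.log_le_log_iff hr₀ hpos).1
    (h.le_logRatio_of_init (Real.log_nonpos hr₀.le hr)
      (fun y hy => Real.log_le_log hr₀ (hinit y hy)) hx ⟨ht.1, le_rfl⟩)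

end BoundedCurvature

end WarpedBergerFlow

/-- with `ε := inf_{x>0} (c/b)(x,0)`, for every `x > 0` and `t ∈ [0,T)`,
`ε ≤ (c/b)(x,t) ≤ 1`. -/
theorem warpedBerger_cb_ratio_bounds (F : WarpedBergerFlow) (hBC : F.BoundedCurvature)
    (ε : ℝ) (hε : ε = sInf {r : ℝ | ∃ x > 0, r = F.c x 0 / F.b x 0}) :
    ∀ x > 0, ∀ t ∈ Set.Ico (0:ℝ) F.T,
      ε ≤ F.c x t / F.b x t ∧ F.c x t / F.b x t ≤ 1 := by
  have hle : ∀ y > 0, F.c y 0 / F.b y 0 ≤ 1 := fun y hy =>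
    div_le_one_of_le₀ (F.ordered_init y hy) (F.b_pos y hy 0 F.zero_mem_Ico).le
  have hε_le : ∀ y > 0, ε ≤ F.c y 0 / F.b y 0 := by
    intro y hy
    have hbdd : BddBelow {r : ℝ | ∃ x > 0, r = F.c x 0 / F.b x 0} := by
      refine ⟨0, ?_⟩
      rintro _ ⟨z, hz, rfl⟩
      exact div_nonneg (F.c_pos z hz 0 F.zero_mem_Ico).le (F.b_pos z hz 0 F.zero_mem_Ico).le
    exact hε.trans_le (csInf_le hbdd ⟨y, hy, rfl⟩)
  exact fun x hx t ht => ⟨hBC.le_div_of_init ((hε_le 1 one_pos).trans (hle 1 one_pos)) hε_le hx ht,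
    hBC.div_le_of_init le_rfl hle hx ht⟩
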